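/- arXiv:2507.22340 — 10 statements merged into one kernel-verified Lean document; each statement's English description precedes it below -/
import Mathlib

section
/- Let H be a real M×n matrix with linearly independent columns, and let s be a natural number. Then the following are equivalent: (i) the only vector in the column space of H that has at most 2s nonzero entries is the zero vector; (ii) for every y ∈ ℝ^M, if (z₁,e₁) and (z₂,e₂) are pairs with z₁,z₂ ∈ ℝ^n, e₁,e₂ ∈ ℝ^M each having at most s nonzero entries, and y = Hz₁ + e₁ = Hz₂ + e₂, then z₁ = z₂ and e₁ = e₂. -/
/-!
Two decompositions `H z₁ + e₁ = H z₂ + e₂` with `s`-sparse errors differ by the vector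
`H (z₁ - z₂) = e₂ - e₁` of the column space, whose support lies in the union of the two supports
and so has at most `2s` elements. Conversely, the support of a `2s`-sparse vector `v = H x` splits
into two parts of size at most `s`, so `v = e + w` with `e`, `w` both `s`-sparse; then
`H x + (-w) = H 0 + e` are two decompositions of the same vector, and uniqueness forces `x = 0`.
Linear independence of the columns is used only to pass from `H z₁ = H z₂` to `z₁ = z₂`.
-/

/-- For a matrix `H` with linearly independent columns, the
condition that the only `2s`-sparse vector in the column space of `H` is zero
is equivalent to uniqueness of decompositions `y = Hz + e` with `e` s-sparse. -/
theorem stmt_0 (M n s : ℕ) (H : Matrix (Fin M) (Fin n) ℝ)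
    (hcols : LinearIndependent ℝ fun j : Fin n => fun i : Fin M => H i j) :
    (∀ v : Fin M → ℝ, (∃ x : Fin n → ℝ, v = H.mulVec x) →
        {i : Fin M | v i ≠ 0}.ncard ≤ 2 * s → v = 0) ↔
      (∀ (y : Fin M → ℝ) (z₁ z₂ : Fin n → ℝ) (e₁ e₂ : Fin M → ℝ),
        {i : Fin M | e₁ i ≠ 0}.ncard ≤ s → {i : Fin M | e₂ i ≠ 0}.ncard ≤ s →
        y = H.mulVec z₁ + e₁ → y = H.mulVec z₂ + e₂ → z₁ = z₂ ∧ e₁ = e₂) := by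
  classical
  constructor
  · intro h y z₁ z₂ e₁ e₂ h₁ h₂ hy₁ hy₂
    have hinj : Function.Injective H.mulVec := Matrix.mulVec_injective_iff.mpr hcols
    have heq : H.mulVec z₁ + e₁ = H.mulVec z₂ + e₂ := hy₁.symm.trans hy₂
    have hdiff : e₂ - e₁ = H.mulVec (z₁ - z₂) := by
      rw [Matrix.mulVec_sub, sub_eq_sub_iff_add_eq_add, heq, add_comm]
    have hsub : {i | (e₂ - e₁) i ≠ 0} ⊆ {i | e₁ i ≠ 0} ∪ {i | e₂ i ≠ 0} := by
      intro i hi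
      by_contra hc
      simp only [Set.mem_union, Set.mem_ofPred_eq, not_or, not_not] at hc
      exact hi (by simp [hc.1, hc.2])
    have hcard : {i | (e₂ - e₁) i ≠ 0}.ncard ≤ 2 * s := by
      have := Set.ncard_le_ncard hsub (Set.toFinite _)
      have := Set.ncard_union_le {i | e₁ i ≠ 0} {i | e₂ i ≠ 0}
      omega
    have he : e₁ = e₂ := (sub_eq_zero.mp (h _ ⟨_, hdiff⟩ hcard)).symm
    subst he
    exact ⟨hinj (add_right_cancel heq), rfl⟩
  · rintro h v ⟨x, hx⟩ hcard
    obtain ⟨A, hA, hAcard⟩ := Set.exists_subset_card_eq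
      (min_le_right s {i : Fin M | v i ≠ 0}.ncard)
    have h₁ : {i | (fun i => if i ∈ A then 0 else -v i) i ≠ 0}.ncard ≤ s := by
      have hs : {i | (fun i => if i ∈ A then 0 else -v i) i ≠ 0} = {i | v i ≠ 0} \ A := by
        ext i
        by_cases hi : i ∈ A <;> simp [hi]
      rw [hs, Set.ncard_sdiff hA (Set.toFinite _)]
      omega
    have h₂ : {i | (fun i => if i ∈ A then v i else 0) i ≠ 0}.ncard ≤ s := by
      have hs : {i | (fun i => if i ∈ A then v i else 0) i ≠ 0} ⊆ A := by
        intro i hi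
        by_contra hc
        simp [hc] at hi
      have := Set.ncard_le_ncard hs (Set.toFinite _)
      omega
    have hx0 : x = 0 := by
      refine (h (fun i => if i ∈ A then v i else 0) x 0 _ _ h₁ h₂ ?_ ?_).1
      · rw [← hx]
        ext i
        by_cases hi : i ∈ A <;> simp [hi]
      · simp
    rw [hx, hx0, Matrix.mulVec_zero]
end

section
/- Let h ∈ ℝ^m be a nonzero vector and let s be a natural number with s ≤ m. Suppose that for every index set S ⊆ {1,…,m} with |S| ≤ s one has ‖h_S‖₁ < ‖h_{S^c}‖₁. Then h has strictly more than 2s nonzero entries, i.e. |supp(h)| > 2s. -/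
/-!
If the support `T` of `h` had at most `2 * s` elements, it would split into two disjoint parts `A`
and `T \ A` with at most `s` elements each. Since `h` vanishes off `T`, the `ℓ¹` mass of `h` on the
complement of either part equals its mass on the other part, so the hypothesis applied to both parts
makes the mass of each strictly smaller than that of the other, a contradiction.
-/

/-- If a nonzero vector `h ∈ ℝ^m` satisfies
`‖h_S‖₁ < ‖h_{Sᶜ}‖₁` for every index set `S` with `|S| ≤ s ≤ m`,
then `h` has strictly more than `2s` nonzero entries. -/
theorem stmt_1 (m s : ℕ) (h : Fin m → ℝ) (hne : h ≠ 0) (hsm : s ≤ m)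
    (hyp : ∀ S : Finset (Fin m), S.card ≤ s →
      ∑ i ∈ S, |h i| < ∑ i ∈ Sᶜ, |h i|) :
    2 * s < {i : Fin m | h i ≠ 0}.ncard := by
  classical
  by_contra! hcard
  set T : Finset (Fin m) := Finset.univ.filter (fun i => h i ≠ 0) with hT
  have hTcard : T.card ≤ 2 * s := by
    have hcoe : {i : Fin m | h i ≠ 0} = (T : Set (Fin m)) := by ext i; simp [hT]
    rwa [hcoe, Set.ncard_coe_finset] at hcard
  obtain ⟨A, hAT, hA⟩ := Finset.exists_subset_card_eq (min_le_right s T.card)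
  have hBcard : (T \ A).card ≤ s := by
    rw [Finset.card_sdiff_of_subset hAT]; omega
  have h_zero : ∀ i, i ∉ T → |h i| = 0 := fun i hi => by simpa [hT] using hi
  have hAc : ∑ i ∈ T \ A, |h i| = ∑ i ∈ Aᶜ, |h i| := by
    refine Finset.sum_subset (fun i hi => ?_) (fun i hi hi' => h_zero i ?_)
    · simp_all
    · simp only [Finset.mem_compl, Finset.mem_sdiff] at hi hi'
      tauto
  have hBc : ∑ i ∈ A, |h i| = ∑ i ∈ (T \ A)ᶜ, |h i| := by
    refine Finset.sum_subset (fun i hi => ?_) (fun i hi hi' => h_zero i ?_)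
    · simp [hi]
    · simp only [Finset.mem_compl, Finset.mem_sdiff] at hi
      tauto
  have h1 := hyp A (by omega)
  have h2 := hyp (T \ A) hBcard
  linarith
end

section
/- (Uniqueness of state recovery.) Let H be a real M×n matrix with linearly independent columns and let s be a natural number with s ≤ M. Suppose that for every nonzero vector h in the column space of H and every index set S ⊆ {1,…,M} with |S| ≤ s one has ‖h_S‖₁ < ‖h_{S^c}‖₁. Then for every y ∈ ℝ^M there exists at most one pair (x, e) with x ∈ ℝ^n and e ∈ ℝ^M having at most s nonzero entries such that y = Hx + e; that is, if Hz₁ + e₁ = Hz₂ + e₂ with e₁, e₂ each s-sparse, then z₁ = z₂ and e₁ = e₂. -/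
/-!
If `H z₁ + e₁ = H z₂ + e₂`, then `v = H (z₁ - z₂) = e₂ - e₁` vanishes off `T₁ ∪ T₂`, where `Tₖ` is
the support of `eₖ`. Hence `‖v_{T₁ᶜ}‖₁ ≤ ‖v_{T₂}‖₁` and `‖v_{T₂ᶜ}‖₁ ≤ ‖v_{T₁}‖₁`
(`sum_abs_compl_le`). If `v ≠ 0`, the hypothesis applied to `T₁` and to `T₂` gives
`‖v_{T₁}‖₁ < ‖v_{T₁ᶜ}‖₁ ≤ ‖v_{T₂}‖₁ < ‖v_{T₂ᶜ}‖₁ ≤ ‖v_{T₁}‖₁`, which is absurd. So `v = 0`, whence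
`e₁ = e₂`, and `z₁ = z₂` because `H` is injective.
-/

theorem sum_abs_compl_le {M : ℕ} (v : Fin M → ℝ) (A B : Finset (Fin M))
    (hAB : ∀ i, v i ≠ 0 → i ∈ A ∨ i ∈ B) :
    ∑ i ∈ Aᶜ, |v i| ≤ ∑ i ∈ B, |v i| := by
  rw [← Finset.sum_filter_ne_zero Aᶜ]
  refine Finset.sum_le_sum_of_subset_of_nonneg ?_ fun i _ _ => abs_nonneg _
  intro i hi
  rw [Finset.mem_filter, Finset.mem_compl] at hi
  exact (hAB i (abs_ne_zero.mp hi.2)).resolve_left hi.1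

/-- Uniqueness of state recovery: If every nonzero vector in the
column space of `H` satisfies `‖h_S‖₁ < ‖h_{Sᶜ}‖₁` for all `|S| ≤ s`, then the
decomposition `y = Hx + e` with `e` s-sparse is unique. -/
theorem stmt_2 (M n s : ℕ) (H : Matrix (Fin M) (Fin n) ℝ)
    (hcols : LinearIndependent ℝ fun j : Fin n => fun i : Fin M => H i j)
    (hsM : s ≤ M)
    (hcsp : ∀ v : Fin M → ℝ, (∃ x : Fin n → ℝ, v = H.mulVec x) → v ≠ 0 →
      ∀ S : Finset (Fin M), S.card ≤ s →
        ∑ i ∈ S, |v i| < ∑ i ∈ Sᶜ, |v i|) :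
    ∀ (z₁ z₂ : Fin n → ℝ) (e₁ e₂ : Fin M → ℝ),
      {i : Fin M | e₁ i ≠ 0}.ncard ≤ s → {i : Fin M | e₂ i ≠ 0}.ncard ≤ s →
      H.mulVec z₁ + e₁ = H.mulVec z₂ + e₂ → z₁ = z₂ ∧ e₁ = e₂ := by
  intro z₁ z₂ e₁ e₂ h₁ h₂ heq
  have hv : H.mulVec (z₁ - z₂) = e₂ - e₁ := by
    rw [Matrix.mulVec_sub, sub_eq_sub_iff_add_eq_add, heq, add_comm]
  have hv0 : e₂ - e₁ = 0 := by
    by_contra hne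
    have key := hcsp (e₂ - e₁) ⟨z₁ - z₂, hv.symm⟩ hne
    rw [Set.ncard_eq_toFinset_card'] at h₁ h₂
    have k₁ := key _ h₁
    have k₂ := key _ h₂
    have hsupp : ∀ i, (e₂ - e₁) i ≠ 0 →
        i ∈ {i | e₁ i ≠ 0}.toFinset ∨ i ∈ {i | e₂ i ≠ 0}.toFinset := by
      intro i hi
      simp only [Set.mem_toFinset, Set.mem_setOf_eq]
      by_contra! hc
      exact hi (by simp [hc.1, hc.2])
    have l₁ := sum_abs_compl_le _ _ _ hsupp
    have l₂ := sum_abs_compl_le _ _ _ fun i hi => (hsupp i hi).symm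
    linarith
  refine ⟨?_, (sub_eq_zero.mp hv0).symm⟩
  have hinj : Function.Injective H.mulVec := Matrix.mulVec_injective_iff.mpr hcols
  exact hinj (sub_eq_zero.mp (by rw [← Matrix.mulVec_sub, hv, hv0]))
end

section
/- Let H be a real m×n matrix and s a natural number with s ≤ m. Then the following are equivalent: (i) for every nonzero h in the column space of H and every index set S ⊆ {1,…,m} with |S| ≤ s, ‖h_S‖₁ < ‖h_{S^c}‖₁; (ii) there exists β ∈ (0,1) such that for every h in the column space of H and every index set S ⊆ {1,…,m} with |S| ≤ s, ‖h_S‖₁ ≤ β·‖h_{S^c}‖₁. -/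
/-!
Both `ℓ¹` seminorms are homogeneous, so for fixed `S` the ratio `‖v_S‖₁ / ‖v_{Sᶜ}‖₁` on the nonzero
vectors of a subspace is determined by its values on the unit sphere of that subspace, which is
compact. Under the strict inequality the denominator is positive there and the ratio is continuous,
so it attains a maximum, which is `< 1` (`exists_ratio_bound`). Hence every `β` close enough to `1`
from below works for a given `S`, and since there are finitely many `S` a common `β` exists.
Conversely, if `v ≠ 0` then `β < 1` makes the inequality strict, because `‖v_{Sᶜ}‖₁ = 0` would force
`‖v_S‖₁ = 0` and so `v = 0`.
-/

/-- The compactness step: on a subspace, the strict inequality for one index set `S` is uniform. -/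
lemma exists_ratio_bound {m : ℕ} (W : Submodule ℝ (Fin m → ℝ)) (S : Finset (Fin m))
    (h : ∀ v ∈ W, v ≠ 0 → ∑ i ∈ S, |v i| < ∑ i ∈ Sᶜ, |v i|) :
    ∃ M < (1 : ℝ), ∀ v ∈ W, v ≠ 0 → ∑ i ∈ S, |v i| ≤ M * ∑ i ∈ Sᶜ, |v i| := by
  have hpos : ∀ v ∈ W, v ≠ 0 → 0 < ∑ i ∈ Sᶜ, |v i| := fun v hv h0 =>
    (Finset.sum_nonneg fun i _ => abs_nonneg (v i)).trans_lt (h v hv h0)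
  let K : Set (Fin m → ℝ) := Metric.sphere 0 1 ∩ W
  have hK : IsCompact K := (isCompact_sphere 0 1).inter_right W.closed_of_finiteDimensional
  have hK0 : ∀ u ∈ K, u ≠ 0 := by
    rintro u ⟨hu, -⟩ rfl
    simp at hu
  have hcont : ContinuousOn (fun v : Fin m → ℝ => (∑ i ∈ S, |v i|) / ∑ i ∈ Sᶜ, |v i|) K :=
    ContinuousOn.div (by fun_prop) (by fun_prop) fun u hu => (hpos u hu.2 (hK0 u hu)).ne'
  have hnormalize : ∀ v ∈ W, v ≠ 0 → ‖v‖⁻¹ • v ∈ K := fun v hv h0 =>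
    ⟨by simp [norm_smul, h0], W.smul_mem _ hv⟩
  rcases K.eq_empty_or_nonempty with hE | hne
  · refine ⟨0, one_pos, fun v hv h0 => ?_⟩
    have := hnormalize v hv h0
    simp [hE] at this
  · obtain ⟨u, hu, hmax⟩ := hK.exists_isMaxOn hne hcont
    refine ⟨_, (div_lt_one (hpos u hu.2 (hK0 u hu))).2 (h u hu.2 (hK0 u hu)), fun v hv h0 => ?_⟩
    rw [← div_le_iff₀ (hpos v hv h0)]
    have hle := hmax (hnormalize v hv h0)
    have hn : |‖v‖⁻¹| ≠ 0 := by simp [h0]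
    simpa only [Set.mem_ofPred_eq, Pi.smul_apply, smul_eq_mul, abs_mul, ← Finset.mul_sum,
      mul_div_mul_left _ _ hn] using hle

open Filter Topology in

/-- The strict inequality `‖h_S‖₁ < ‖h_{Sᶜ}‖₁` for all nonzero
`h ∈ range(H)` and all `|S| ≤ s` is equivalent to the existence of `β ∈ (0,1)`
with `‖h_S‖₁ ≤ β·‖h_{Sᶜ}‖₁` for all `h ∈ range(H)` and all `|S| ≤ s`. -/
theorem stmt_3 (m n s : ℕ) (H : Matrix (Fin m) (Fin n) ℝ) (hsm : s ≤ m) :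
    (∀ v : Fin m → ℝ, (∃ x : Fin n → ℝ, v = H.mulVec x) → v ≠ 0 →
      ∀ S : Finset (Fin m), S.card ≤ s →
        ∑ i ∈ S, |v i| < ∑ i ∈ Sᶜ, |v i|) ↔
    (∃ β : ℝ, 0 < β ∧ β < 1 ∧
      ∀ v : Fin m → ℝ, (∃ x : Fin n → ℝ, v = H.mulVec x) →
        ∀ S : Finset (Fin m), S.card ≤ s →
          ∑ i ∈ S, |v i| ≤ β * ∑ i ∈ Sᶜ, |v i|) := by
  constructor
  · intro h
    have hS : ∀ S : Finset (Fin m), ∀ᶠ β : ℝ in 𝓝[<] 1, S.card ≤ s →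
        ∀ v : Fin m → ℝ, (∃ x : Fin n → ℝ, v = H.mulVec x) →
          ∑ i ∈ S, |v i| ≤ β * ∑ i ∈ Sᶜ, |v i| := by
      intro S
      by_cases hc : S.card ≤ s
      · obtain ⟨M, hM, hb⟩ := exists_ratio_bound (LinearMap.range H.mulVecLin) S (by
          rintro v ⟨x, hx⟩ h0
          exact h v ⟨x, by simpa using hx.symm⟩ h0 S hc)
        filter_upwards [Ioo_mem_nhdsLT hM] with β hβ _ v hv
        obtain ⟨x, hx⟩ := hv
        by_cases h0 : v = 0
        · simp [h0]
        · exact (hb v ⟨x, by simpa using hx.symm⟩ h0).trans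
            (mul_le_mul_of_nonneg_right hβ.1.le (Finset.sum_nonneg fun i _ => abs_nonneg _))
      · exact Eventually.of_forall fun _ hc' => absurd hc' hc
    have h01 : ∀ᶠ β : ℝ in 𝓝[<] 1, β ∈ Set.Ioo (0 : ℝ) 1 := Ioo_mem_nhdsLT zero_lt_one
    obtain ⟨β, hβ, hb⟩ := (h01.and (eventually_all.2 hS)).exists
    exact ⟨β, hβ.1, hβ.2, fun v hv S hc => hb S hc v hv⟩
  · rintro ⟨β, -, hβ1, h⟩ v hv h0 S hc
    have hle := h v hv S hc
    have hb : 0 ≤ ∑ i ∈ Sᶜ, |v i| := Finset.sum_nonneg fun i _ => abs_nonneg _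
    have htotal : 0 < ∑ i ∈ S, |v i| + ∑ i ∈ Sᶜ, |v i| := by
      rw [Finset.sum_add_sum_compl]
      obtain ⟨i, hi⟩ := Function.ne_iff.1 h0
      exact Finset.sum_pos' (fun i _ => abs_nonneg _) ⟨i, Finset.mem_univ i, abs_pos.2 hi⟩
    have hb' : 0 < ∑ i ∈ Sᶜ, |v i| := by
      refine hb.lt_of_ne fun hz => ?_
      rw [← hz] at hle htotal
      linarith
    nlinarith
end

section
/- Let h ∈ ℝ^m, let T ⊆ {1,…,m} be an index set, and let S ⊆ T^c be a nonempty subset of cardinality q such that |h_i| ≤ |h_j| for every i ∈ S and every j ∈ T^c \ S. If |T^c \ S| ≥ q, then ‖h_S‖₂ ≤ ‖h_{T^c}‖₁ / √q. -/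
/-!
Let `M` be the largest `|h i|` on `S`. Then `‖h_S‖₂² ≤ q M²`, while every one of the at least `q`
entries on `Tᶜ \ S` has modulus at least `M`, so `‖h_{Tᶜ}‖₁ ≥ q M`. Hence
`√q ‖h_S‖₂ ≤ q M ≤ ‖h_{Tᶜ}‖₁`.
-/

/-- If `S ⊆ Tᶜ` has cardinality `q` and consists of
smallest-magnitude entries of `h` on `Tᶜ`, and `|Tᶜ \ S| ≥ q`, then
`‖h_S‖₂ ≤ ‖h_{Tᶜ}‖₁ / √q`. -/
theorem stmt_6 (m q : ℕ) (h : Fin m → ℝ) (T S : Finset (Fin m))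
    (hST : S ⊆ Tᶜ) (hSne : S.Nonempty) (hScard : S.card = q)
    (hsmall : ∀ i ∈ S, ∀ j ∈ Tᶜ \ S, |h i| ≤ |h j|)
    (hbig : q ≤ (Tᶜ \ S).card) :
    Real.sqrt (∑ i ∈ S, (h i) ^ 2) ≤ (∑ i ∈ Tᶜ, |h i|) / Real.sqrt q := by
  obtain ⟨k, hk, hmax⟩ := S.exists_max_image (fun i => |h i|) hSne
  have hq : (0 : ℝ) < q := by
    rw [← hScard]; exact_mod_cast hSne.card_pos
  have h2 : ∑ i ∈ S, (h i) ^ 2 ≤ q * |h k| ^ 2 := by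
    rw [← hScard, ← nsmul_eq_mul]
    refine Finset.sum_le_card_nsmul _ _ _ fun i hi => ?_
    rw [← sq_abs]
    exact pow_le_pow_left₀ (abs_nonneg _) (hmax i hi) 2
  have h1 : q * |h k| ≤ ∑ i ∈ Tᶜ, |h i| := calc
    q * |h k| ≤ ((Tᶜ \ S).card : ℝ) * |h k| := by gcongr
    _ ≤ ∑ i ∈ Tᶜ \ S, |h i| := by
      rw [← nsmul_eq_mul]
      exact Finset.card_nsmul_le_sum _ _ _ (hsmall k hk)
    _ ≤ ∑ i ∈ Tᶜ, |h i| :=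
      Finset.sum_le_sum_of_subset_of_nonneg Finset.sdiff_subset fun _ _ _ => abs_nonneg _
  rw [le_div_iff₀ (Real.sqrt_pos.2 hq)]
  calc Real.sqrt (∑ i ∈ S, (h i) ^ 2) * Real.sqrt q
      ≤ Real.sqrt (q * |h k| ^ 2) * Real.sqrt q := by gcongr
    _ = q * |h k| := by
      rw [Real.sqrt_mul hq.le, Real.sqrt_sq (abs_nonneg _), mul_right_comm,
        Real.mul_self_sqrt hq.le]
    _ ≤ _ := h1
end

section
/- Let H be a real m×n matrix, T ⊆ {1,…,m} an index set, ε > 0, and σ₁ > 1 a constant such that ‖H_T v‖₁ ≤ σ₁·‖H_{T^c} v‖₁ for all v ∈ ℝ^n. Let x_e ∈ ℝ^n satisfy ‖H_{T^c} x_e‖₁ ≤ ε and ‖H_T x_e‖₁ ≥ σ₁·ε, and let x⊥ ∈ ℝ^n be a minimizer over z ∈ ℝ^n of the function z ↦ ‖H_T(z − x_e)‖₁ + ‖H_{T^c} z‖₁. Suppose there are constants σ̄ > 0 and σ̲ > 0 with ‖H_T v‖₂ ≤ σ̄·‖v‖₂ and ‖H_{T^c} v‖₂ ≥ σ̲·‖v‖₂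 for all v ∈ ℝ^n, and that √|T|·σ̄ > σ̲. Then: (i) ‖x⊥‖₂ ≥ (σ₁ − 1)·ε / (√|T|·σ̄ − σ̲), and (ii) ‖H_T(x⊥ − x_e)‖₁ + ‖H_{T^c} x⊥‖₁ ≤ ε. -/
/-!
Comparing the minimizer `xp` with the competitor `z = xe` gives (ii). The triangle inequality
`‖H_T xe‖₁ ≤ ‖H_T xp‖₁ + ‖H_T (xp - xe)‖₁` combined with (ii) then gives
`(σ₁ - 1) ε ≤ ‖H_T xp‖₁ - ‖H_{Tᶜ} xp‖₁`, and the right-hand side is at most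
`(√|T| σbar - σlow) ‖xp‖₂` because `‖·‖₂ ≤ ‖·‖₁ ≤ √|T| ‖·‖₂`.
-/

lemma sum_abs_le_sqrt_card_mul {ι : Type*} (s : Finset ι) (f : ι → ℝ) :
    ∑ i ∈ s, |f i| ≤ Real.sqrt s.card * Real.sqrt (∑ i ∈ s, (f i) ^ 2) := by
  rw [← Real.sqrt_mul (Nat.cast_nonneg _)]
  apply Real.le_sqrt_of_sq_le
  simpa only [sq_abs] using sq_sum_le_card_mul_sum_sq (s := s) (f := fun i => |f i|)

lemma sqrt_sum_sq_le_sum_abs {ι : Type*} (s : Finset ι) (f : ι → ℝ) :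
    Real.sqrt (∑ i ∈ s, (f i) ^ 2) ≤ ∑ i ∈ s, |f i| := by
  apply Real.sqrt_le_iff.2 ⟨Finset.sum_nonneg fun i _ => abs_nonneg _, ?_⟩
  simpa only [sq_abs] using
    Finset.sum_sq_le_sq_sum_of_nonneg (s := s) (f := fun i => |f i|) fun i _ => abs_nonneg _

/-- Core of the (ε,α)-successful attack construction. -/
theorem stmt_7 (m n : ℕ) (H : Matrix (Fin m) (Fin n) ℝ) (T : Finset (Fin m))
    (ε σ₁ : ℝ) (hε : 0 < ε) (hσ₁ : 1 < σ₁)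
    (hratio : ∀ v : Fin n → ℝ,
      ∑ i ∈ T, |H.mulVec v i| ≤ σ₁ * ∑ i ∈ Tᶜ, |H.mulVec v i|)
    (xe : Fin n → ℝ)
    (hxe1 : ∑ i ∈ Tᶜ, |H.mulVec xe i| ≤ ε)
    (hxe2 : σ₁ * ε ≤ ∑ i ∈ T, |H.mulVec xe i|)
    (xp : Fin n → ℝ)
    (hxp : ∀ z : Fin n → ℝ,
      ∑ i ∈ T, |H.mulVec (xp - xe) i| + ∑ i ∈ Tᶜ, |H.mulVec xp i| ≤
        ∑ i ∈ T, |H.mulVec (z - xe) i| + ∑ i ∈ Tᶜ, |H.mulVec z i|)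
    (σbar σlow : ℝ) (hσbar : 0 < σbar) (hσlow : 0 < σlow)
    (hub : ∀ v : Fin n → ℝ,
      Real.sqrt (∑ i ∈ T, (H.mulVec v i) ^ 2) ≤ σbar * Real.sqrt (∑ j, (v j) ^ 2))
    (hlb : ∀ v : Fin n → ℝ,
      σlow * Real.sqrt (∑ j, (v j) ^ 2) ≤ Real.sqrt (∑ i ∈ Tᶜ, (H.mulVec v i) ^ 2))
    (hgap : σlow < Real.sqrt T.card * σbar) :
    (σ₁ - 1) * ε / (Real.sqrt T.card * σbar - σlow) ≤ Real.sqrt (∑ j, (xp j) ^ 2) ∧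
    ∑ i ∈ T, |H.mulVec (xp - xe) i| + ∑ i ∈ Tᶜ, |H.mulVec xp i| ≤ ε := by
  have hobj : ∑ i ∈ T, |H.mulVec (xp - xe) i| + ∑ i ∈ Tᶜ, |H.mulVec xp i| ≤ ε := by
    have h := hxp xe
    simp only [sub_self, Matrix.mulVec_zero, Pi.zero_apply, abs_zero, Finset.sum_const_zero,
      zero_add] at h
    exact h.trans hxe1
  refine ⟨?_, hobj⟩
  have htri : ∑ i ∈ T, |H.mulVec xe i| ≤
      ∑ i ∈ T, |H.mulVec xp i| + ∑ i ∈ T, |H.mulVec (xp - xe) i| := by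
    rw [← Finset.sum_add_distrib]
    refine Finset.sum_le_sum fun i _ => ?_
    rw [Matrix.mulVec_sub, Pi.sub_apply]
    simpa using abs_sub (H.mulVec xp i) (H.mulVec xp i - H.mulVec xe i)
  have hT := (sum_abs_le_sqrt_card_mul T (H.mulVec xp)).trans
    (mul_le_mul_of_nonneg_left (hub xp) (Real.sqrt_nonneg _))
  have hTc := (hlb xp).trans (sqrt_sum_sq_le_sum_abs Tᶜ (H.mulVec xp))
  rw [div_le_iff₀ (sub_pos.2 hgap)]
  linarith
end

section
/- Let H be a real M×n matrix, x ∈ ℝ^n, e ∈ ℝ^M, and y = Hx + e. Let x̂ be a minimizer over z ∈ ℝ^n of ‖y − Hz‖₁, set h = H(x − x̂), and let T ⊆ {1,…,M} be any index set. Then ‖h_{T^c}‖₁ ≤ ‖h_T‖₁ + 2·‖e_{T^c}‖₁. -/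
/-!
Write `h = H (x - xhat)`, so that `y - H xhat = h + e` and `y - H x = e`. Optimality of `xhat`
against `x` gives `‖h + e‖₁ ≤ ‖e‖₁`. Splitting both sides over `T` and `Tᶜ`, bounding
`|h + e|` below by `|e| - |h|` on `T` and by `|h| - |e|` on `Tᶜ`, and cancelling `‖e_T‖₁`
yields the claim.
-/

/-- The optimality of the ℓ₁ decoder implies
`‖h_{Tᶜ}‖₁ ≤ ‖h_T‖₁ + 2‖e_{Tᶜ}‖₁` for `h = H(x − x̂)` and any index set `T`. -/
theorem stmt_11 (M n : ℕ) (H : Matrix (Fin M) (Fin n) ℝ)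
    (x : Fin n → ℝ) (e : Fin M → ℝ) (y : Fin M → ℝ) (hy : y = H.mulVec x + e)
    (xhat : Fin n → ℝ)
    (hopt : ∀ z : Fin n → ℝ,
      ∑ i, |y i - H.mulVec xhat i| ≤ ∑ i, |y i - H.mulVec z i|)
    (T : Finset (Fin M)) :
    ∑ i ∈ Tᶜ, |H.mulVec (x - xhat) i| ≤
      ∑ i ∈ T, |H.mulVec (x - xhat) i| + 2 * ∑ i ∈ Tᶜ, |e i| := by
  subst hy
  -- Comparing `xhat` with `z = x` gives `‖h + e‖₁ ≤ ‖e‖₁`.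
  have h_opt : ∑ i, |H.mulVec (x - xhat) i + e i| ≤ ∑ i, |e i| := by
    convert hopt x using 3 with i _ i _
    · simp only [Matrix.mulVec_sub, Pi.sub_apply, Pi.add_apply]
      ring_nf
    · simp
  rw [← Finset.sum_add_sum_compl T, ← Finset.sum_add_sum_compl T (fun i => |e i|)] at h_opt
  -- The reverse triangle inequality is used in opposite directions on `T` and on `Tᶜ`.
  have h_T : ∑ i ∈ T, |e i| - ∑ i ∈ T, |H.mulVec (x - xhat) i| ≤
      ∑ i ∈ T, |H.mulVec (x - xhat) i + e i| := by
    rw [← Finset.sum_sub_distrib]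
    refine Finset.sum_le_sum fun i _ => ?_
    rw [add_comm]
    exact abs_sub_abs_le_abs_add _ _
  have h_Tc : ∑ i ∈ Tᶜ, |H.mulVec (x - xhat) i| - ∑ i ∈ Tᶜ, |e i| ≤
      ∑ i ∈ Tᶜ, |H.mulVec (x - xhat) i + e i| := by
    rw [← Finset.sum_sub_distrib]
    exact Finset.sum_le_sum fun i _ => abs_sub_abs_le_abs_add _ _
  linarith
end

section
/- Let v ∈ ℝ^N, let A ⊆ {1,…,N} be an index set, and let T₁ ⊆ A be a nonempty subset of cardinality q consisting of largest-magnitude entries of v on A, i.e. |v_i| ≤ |v_j| for every i ∈ A \ T₁ and every j ∈ T₁. Then ‖v restricted to A \ T₁‖₂ ≤ ‖v_A‖₁ / √q. -/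
/-!
Each entry of `v` on `A \ T₁` is at most the average of `|v|` over `T₁`, that is
`q |v i| ≤ ‖v_{T₁}‖₁`. Multiplying by `|v i|` and summing over `A \ T₁` gives
`q ‖v_{A \ T₁}‖₂² ≤ ‖v_{T₁}‖₁ ‖v_{A \ T₁}‖₁`, and each factor on the right is at
most `‖v_A‖₁`.
-/

/-- If `T₁ ⊆ A` has cardinality `q` and consists of
largest-magnitude entries of `v` on `A`, then
`‖v_{A \ T₁}‖₂ ≤ ‖v_A‖₁ / √q`. -/
theorem stmt_13 (N : ℕ) (v : Fin N → ℝ) (A T₁ : Finset (Fin N))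
    (hT₁A : T₁ ⊆ A) (hne : T₁.Nonempty) (q : ℕ) (hcard : T₁.card = q)
    (hbig : ∀ i ∈ A \ T₁, ∀ j ∈ T₁, |v i| ≤ |v j|) :
    Real.sqrt (∑ i ∈ A \ T₁, (v i) ^ 2) ≤ (∑ i ∈ A, |v i|) / Real.sqrt q := by
  have hq : (0 : ℝ) < q := by
    rw [← hcard]
    exact_mod_cast hne.card_pos
  have hsplit := Finset.sum_sdiff (f := fun i => |v i|) hT₁A
  have h1 : 0 ≤ ∑ i ∈ T₁, |v i| := Finset.sum_nonneg fun i _ => abs_nonneg _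
  have h2 : 0 ≤ ∑ i ∈ A \ T₁, |v i| := Finset.sum_nonneg fun i _ => abs_nonneg _
  -- A tail entry is at most the average of `|v|` over `T₁`.
  have havg : ∀ i ∈ A \ T₁, (q : ℝ) * |v i| ≤ ∑ j ∈ T₁, |v j| := fun i hi => by
    simpa [hcard] using T₁.card_nsmul_le_sum (fun j => |v j|) |v i| (hbig i hi)
  have hprod : (∑ i ∈ A \ T₁, (v i) ^ 2) * q
      ≤ (∑ j ∈ T₁, |v j|) * ∑ i ∈ A \ T₁, |v i| := by
    rw [Finset.sum_mul, Finset.mul_sum]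
    refine Finset.sum_le_sum fun i hi => ?_
    rw [← sq_abs]
    nlinarith [mul_le_mul_of_nonneg_right (havg i hi) (abs_nonneg (v i))]
  rw [le_div_iff₀ (Real.sqrt_pos.2 hq), ← Real.sqrt_mul' _ hq.le, ← hsplit]
  refine Real.sqrt_le_iff.2 ⟨add_nonneg h2 h1, ?_⟩
  nlinarith [mul_nonneg h1 h2]
end

section
/- Let H be a real M×n matrix, x ∈ ℝ^n, e ∈ ℝ^M, y = Hx + e, and let T, T̂ ⊆ {1,…,M} be index sets with ‖e_{T^c}‖₁ ≤ ε. Fix ω ∈ (0,1) and define the weight vector w ∈ ℝ^M by w_i = ω for i ∈ T̂ and w_i = 1 otherwise. Let x̂ be a minimizer over z ∈ ℝ^n of the weighted norm ‖y − Hz‖_{1,w}, and set h = H(x − x̂). Then ‖h_{T^c}‖₁ ≤ ω·‖h_T‖₁ + (1−ω)·‖h_{(T ∪ T̂) \ (T ∩ T̂)}‖₁ + 2ε. -/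
/-!
With `h = H(x - x̂)`, the residual of `x̂` is `h + e` and that of `x` is `e`, so optimality gives
`∑ wᵢ(|hᵢ + eᵢ| - |eᵢ|) ≤ 0`. Each summand is bounded below by the triangle inequality, by
`-wᵢ|hᵢ|` on `T` and by `wᵢ|hᵢ| - 2wᵢ|eᵢ|` off `T`. Replacing `wᵢ` by `ω` on `T`, and by `1`
off `T`, costs `(1 - ω)|hᵢ|` exactly on the symmetric difference of `T` and `T̂`. This yields a
coordinatewise inequality, which is then summed.
-/


/-- Optimality of the weighted ℓ₁ decoder implies
`‖h_{Tᶜ}‖₁ ≤ ω‖h_T‖₁ + (1−ω)‖h_{(T∪T̂)\(T∩T̂)}‖₁ + 2ε` for `h = H(x − x̂)`. -/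
theorem stmt_16 (M n : ℕ) (H : Matrix (Fin M) (Fin n) ℝ)
    (x : Fin n → ℝ) (e : Fin M → ℝ) (y : Fin M → ℝ) (hy : y = H.mulVec x + e)
    (T That : Finset (Fin M)) (ε : ℝ) (he : ∑ i ∈ Tᶜ, |e i| ≤ ε)
    (ω : ℝ) (hω0 : 0 < ω) (hω1 : ω < 1)
    (xhat : Fin n → ℝ)
    (hopt : ∀ z : Fin n → ℝ,
      ∑ i, (if i ∈ That then ω else 1) * |y i - H.mulVec xhat i| ≤
        ∑ i, (if i ∈ That then ω else 1) * |y i - H.mulVec z i|) :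
    ∑ i ∈ Tᶜ, |H.mulVec (x - xhat) i| ≤
      ω * ∑ i ∈ T, |H.mulVec (x - xhat) i| +
        (1 - ω) * ∑ i ∈ (T ∪ That) \ (T ∩ That), |H.mulVec (x - xhat) i| +
        2 * ε := by
  have key := hopt x
  have hres : ∀ i, y i - H.mulVec xhat i = H.mulVec (x - xhat) i + e i := by
    intro i
    rw [hy, Matrix.mulVec_sub]
    simp only [Pi.add_apply, Pi.sub_apply]
    ring
  have hresx : ∀ i, y i - H.mulVec x i = e i := by
    intro i
    rw [hy]
    simp
  simp only [hres, hresx] at key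
  generalize H.mulVec (x - xhat) = h at *
  have pw : ∀ i, (if i ∈ Tᶜ then |h i| else 0) +
      (if i ∈ That then ω else 1) * |e i| ≤
      (if i ∈ That then ω else 1) * |h i + e i| +
      ω * (if i ∈ T then |h i| else 0) +
      (1 - ω) * (if i ∈ (T ∪ That) \ (T ∩ That) then |h i| else 0) +
      2 * (if i ∈ Tᶜ then |e i| else 0) := by
    intro i
    have h1 : |e i| ≤ |h i + e i| + |h i| := by
      have := abs_sub (h i + e i) (h i)
      rwa [add_sub_cancel_left] at this
    have h2 : |h i| ≤ |h i + e i| + |e i| := by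
      have := abs_sub (h i + e i) (e i)
      rwa [add_sub_cancel_right] at this
    have h3 := mul_le_mul_of_nonneg_left h1 hω0.le
    have h4 := mul_le_mul_of_nonneg_left h2 hω0.le
    have h5 := mul_nonneg (sub_nonneg.2 hω1.le) (abs_nonneg (e i))
    by_cases hT : i ∈ T <;> by_cases hS : i ∈ That <;> simp [hT, hS] <;> linarith
  have total := Finset.sum_le_sum fun i (_ : i ∈ Finset.univ) => pw i
  simp only [Finset.sum_add_distrib, ← Finset.mul_sum, Finset.sum_ite_mem,
    Finset.univ_inter] at total
  linarith
end

section
/- Let ρ > 0, PPV ∈ (0,1), ω ∈ (0,1), a > 0, δ ≥ 0, and μ₁ ∈ ℝ. Set κ = 1 + ρ − 2·PPV·ρ, assume κ ≥ 0, and define μ₂ = μ₁ + (1−ω)(1−√κ)·√(1+δ)/√a. Then μ₂ > μ₁ if and only if PPV > 1/2. -/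
/-- With `κ = 1 + ρ − 2·PPV·ρ ≥ 0` and
`μ₂ = μ₁ + (1−ω)(1−√κ)√(1+δ)/√a`, one has `μ₂ > μ₁` iff `PPV > 1/2`. -/
theorem stmt_17 (ρ PPV ω a δ μ₁ : ℝ)
    (hρ : 0 < ρ) (hPPV0 : 0 < PPV) (hPPV1 : PPV < 1)
    (hω0 : 0 < ω) (hω1 : ω < 1) (ha : 0 < a) (hδ : 0 ≤ δ)
    (hκ : 0 ≤ 1 + ρ - 2 * PPV * ρ) :
    μ₁ < μ₁ + (1 - ω) * (1 - Real.sqrt (1 + ρ - 2 * PPV * ρ)) *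
      Real.sqrt (1 + δ) / Real.sqrt a ↔ 1 / 2 < PPV := by
  have h1 : 0 < 1 - ω := sub_pos.mpr hω1
  have h2 : 0 < Real.sqrt (1 + δ) := Real.sqrt_pos.mpr (by linarith)
  have h3 : 0 < Real.sqrt a := Real.sqrt_pos.mpr ha
  -- The factors other than `1 - √κ` are positive, so only the sign of `1 - √κ` matters.
  rw [lt_add_iff_pos_right, div_pos_iff_of_pos_right h3, mul_pos_iff_of_pos_right h2,
    mul_pos_iff_of_pos_left h1, sub_pos, Real.sqrt_lt' one_pos, one_pow]
  -- It remains to compare `κ < 1`, that is `ρ * (1 - 2 * PPV) < 0`, with `1 / 2 < PPV`.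
  constructor <;> intro h <;> nlinarith
end
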